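/- arXiv:2406.07838 — 3 statements merged into one kernel-verified Lean document; each statement's English description precedes it below -/
import Mathlib

section
/- Let n ≥ 1 and N = (N_0, …, N_n) ∈ ℤ^{n+1} with N_0 + ⋯ + N_n = 0 and F_n(N) nonempty, and set α_i = s_i and β_j = s_{n−1−j} for 0 ≤ i, j ≤ n−1. Then the infimum of ∏_{0 ≤ i, j ≤ n−1, i+j ≤ n} (1 − x_i y_j)^{−1} · ∏_{i=0}^{n−1} x_i^{−α_i} · ∏_{j=0}^{n−1} y_j^{−β_j} over all x, y ∈ ℝ_{>0}^{n} satisfying x_i y_j < 1 whenever i + j ≤ n, equals sup_{f ∈ F_n(N)} e^{H(f)}. -/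
open Finset

/-- The entropy-like function `h(t) = (t+1)·log(t+1) − t·log t` (with `h 0 = 0`
since `Real.log 0 = 0`). -/
noncomputable def entH (t : ℝ) : ℝ := (t + 1) * Real.log (t + 1) - t * Real.log t

/-- `f` is an integer flow on the complete graph `k_{n+1}` with netflow `N`:
`f i j` is the flow on the edge `(i,j)` for `i < j`, it vanishes for `i ≥ j`,
and the netflow at each vertex `i` is `N i`. -/
def IsIntFlow (n : ℕ) (N : Fin (n + 1) → ℤ) (f : Fin (n + 1) → Fin (n + 1) → ℕ) : Prop :=
  (∀ i j : Fin (n + 1), ¬ i < j → f i j = 0) ∧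
  ∀ i : Fin (n + 1),
    (∑ j : Fin (n + 1), if i < j then (f i j : ℤ) else 0) -
      (∑ k : Fin (n + 1), if k < i then (f k i : ℤ) else 0) = N i

/-- The Kostant partition function: the number of integer flows on the complete
graph `k_{n+1}` with netflow `N`. -/
noncomputable def Kn (n : ℕ) (N : Fin (n + 1) → ℤ) : ℕ :=
  Nat.card {f : Fin (n + 1) → Fin (n + 1) → ℕ // IsIntFlow n N f}

/-- The flow polytope of the complete graph `k_{n+1}` with netflow `N`. -/
def FlowPolytope (n : ℕ) (N : Fin (n + 1) → ℝ) : Set (Fin (n + 1) → Fin (n + 1) → ℝ) :=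
  {f | (∀ i j : Fin (n + 1), i < j → 0 ≤ f i j) ∧
    (∀ i j : Fin (n + 1), ¬ i < j → f i j = 0) ∧
    ∀ i : Fin (n + 1),
      (∑ j : Fin (n + 1), if i < j then f i j else 0) -
        (∑ k : Fin (n + 1), if k < i then f k i else 0) = N i}

/-- The flow entropy `H(f)`. -/
noncomputable def flowEntropy (n : ℕ) (N : Fin (n + 1) → ℝ)
    (f : Fin (n + 1) → Fin (n + 1) → ℝ) : ℝ :=
  (∑ i : Fin (n + 1), ∑ j : Fin (n + 1), if i < j then entH (f i j) else 0) +
  ∑ j : Fin (n + 1), if 0 < (j : ℕ) ∧ (j : ℕ) < n then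
    entH (∑ i : Fin (n + 1), if i < j then (N i - f i j) else 0) else 0

/-- Partial sums `s_k = N_0 + ⋯ + N_k`. -/
def sPartial (n : ℕ) (N : Fin (n + 1) → ℤ) (k : ℕ) : ℤ :=
  ∑ j : Fin (n + 1), if (j : ℕ) ≤ k then N j else 0

/-- Extend `(N_0,…,N_{n−1})` to the netflow vector `(N_0,…,N_{n−1},−∑ N_i)`. -/
def extend (n : ℕ) (N : Fin n → ℤ) : Fin (n + 1) → ℤ := Fin.snoc N (-∑ i, N i)

/-!
Fill the diagonal of a flow with the amounts passing over the vertices. The completed matrix is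
nonnegative and upper triangular, its margins are the partial sums of the netflow, and its total
entropy is the flow entropy; conversely every such matrix comes from a flow. Without its empty row
and column, and with the columns reversed, it is a matrix supported on `i + j ≤ n`.

Maximizing entropy over matrices with given support and margins is a concave program. The conjugate
of `h` is `w ↦ -log (1 - e⁻ʷ)`, so the exponential of the Lagrange dual function is the capacity
objective at `x = e⁻ᵘ`, `y = e⁻ᵛ`. There is no duality gap: the value function of the program has a
convex hypograph, closed because a strictly feasible multiplier bounds all weights with a given
moment, and a point above the graph can be strictly separated from it.
-/

open Filter Topology

lemma entH_zero : entH 0 = 0 := by simp [entH]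

lemma continuous_entH : Continuous entH :=
  (Real.continuous_mul_log.comp (continuous_add_const 1)).sub Real.continuous_mul_log

lemma hasDerivAt_entH {t : ℝ} (ht : 0 < t) :
    HasDerivAt entH (Real.log (t + 1) - Real.log t) t := by
  have hadd : HasDerivAt (fun s => (s + 1) * Real.log (s + 1)) (Real.log (t + 1) + 1) t :=
    (Real.hasDerivAt_mul_log (x := t + 1) (by positivity)).comp_add_const t 1
  exact (hadd.sub (Real.hasDerivAt_mul_log ht.ne')).congr_deriv (by ring)

lemma concaveOn_entH : ConcaveOn ℝ (Set.Ici 0) entH := by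
  refine AntitoneOn.concaveOn_of_deriv (convex_Ici 0) continuous_entH.continuousOn ?_ ?_ <;>
    rw [interior_Ici]
  · exact fun t ht => (hasDerivAt_entH ht).differentiableAt.differentiableWithinAt
  · intro s (hs : 0 < s) t (ht : 0 < t) hst
    rw [(hasDerivAt_entH hs).deriv, (hasDerivAt_entH ht).deriv,
      ← Real.log_div (by positivity) ht.ne', ← Real.log_div (by positivity) hs.ne']
    apply Real.log_le_log (by positivity)
    rw [div_le_div_iff₀ ht hs]
    linarith

lemma log_add_one_le_entH {t : ℝ} (ht : 0 < t) : Real.log (t + 1) ≤ entH t := by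
  have hlog : Real.log t ≤ Real.log (t + 1) := Real.log_le_log ht (by linarith)
  have := mul_le_mul_of_nonneg_left hlog ht.le
  rw [entH]
  linarith

lemma tendsto_entH_atTop : Tendsto entH atTop atTop :=
  tendsto_atTop_mono' _ ((eventually_gt_atTop 0).mono fun _ => log_add_one_le_entH)
    (Real.tendsto_log_atTop.comp (tendsto_atTop_add_const_right _ 1 tendsto_id))

/-- The concave conjugate `sup_{t ≥ 0} (h(t) - t w)` of the entropy function `h`, in closed form
for `w > 0`; the supremum is infinite for `w ≤ 0`. -/
noncomputable def entHConj (w : ℝ) : ℝ := -Real.log (1 - Real.exp (-w))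

lemma one_sub_exp_neg_pos {w : ℝ} (hw : 0 < w) : 0 < 1 - Real.exp (-w) := by
  simpa using hw

lemma exp_entHConj {w : ℝ} (hw : 0 < w) : Real.exp (entHConj w) = (1 - Real.exp (-w))⁻¹ := by
  rw [entHConj, Real.exp_neg, Real.exp_log (one_sub_exp_neg_pos hw)]

lemma entH_le_entHConj_add_mul {t w : ℝ} (ht : 0 ≤ t) (hw : 0 < w) :
    entH t ≤ entHConj w + t * w := by
  have hq := one_sub_exp_neg_pos hw
  rcases ht.eq_or_lt with rfl | ht
  · have := Real.log_le_sub_one_of_pos hq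
    rw [entH_zero, entHConj]
    linarith [Real.exp_pos (-w)]
  -- Gibbs' inequality between geometric distributions: the means `t` and `q⁻¹ - 1`, `q = 1 - e⁻ʷ`.
  have hfail : t * (Real.log (t + 1) - Real.log t - w) ≤ Real.exp (-w) * (t + 1) - t := by
    have := Real.log_le_sub_one_of_pos (x := Real.exp (-w) * (t + 1) / t) (by positivity)
    rw [Real.log_div (by positivity) ht.ne', Real.log_mul (by positivity) (by positivity),
      Real.log_exp] at this
    calc t * (Real.log (t + 1) - Real.log t - w)
        ≤ t * (Real.exp (-w) * (t + 1) / t - 1) := mul_le_mul_of_nonneg_left (by linarith) ht.le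
      _ = Real.exp (-w) * (t + 1) - t := by field_simp
  have hsucc : Real.log (1 - Real.exp (-w)) + Real.log (t + 1) ≤
      (1 - Real.exp (-w)) * (t + 1) - 1 := by
    rw [← Real.log_mul hq.ne' (by positivity)]
    exact Real.log_le_sub_one_of_pos (by positivity)
  rw [entH, entHConj]
  linarith

lemma exists_entH_eq_entHConj_add_mul {w : ℝ} (hw : 0 < w) :
    ∃ t, 0 ≤ t ∧ entH t = entHConj w + t * w := by
  have hq := one_sub_exp_neg_pos hw
  refine ⟨Real.exp (-w) / (1 - Real.exp (-w)), by positivity, ?_⟩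
  have hadd : Real.exp (-w) / (1 - Real.exp (-w)) + 1 = (1 - Real.exp (-w))⁻¹ := by
    field_simp
    ring
  rw [entH, Real.log_div (by positivity) hq.ne', hadd, Real.log_inv, Real.log_exp, ← hadd, entHConj]
  ring

section MomentDuality

variable {E W : Type*} [Fintype E] [AddCommGroup W] [Module ℝ W]

/-- The nonnegative weights `a` on `E` whose moment `∑ e, a e • m e` is `b`: the feasible set of
entropy maximization under linear constraints. -/
def momentPolytope (m : E → W) (b : W) : Set (E → ℝ) :=
  {a | (∀ e, 0 ≤ a e) ∧ ∑ e, a e • m e = b}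

/-- The moments paired with the lower bounds of the entropies of their weights. Where the maximum
entropy with a given moment is attained, this is the hypograph of its value. -/
def entropyHypograph (m : E → W) : Set (W × ℝ) :=
  {p | ∃ a ∈ momentPolytope m p.1, p.2 ≤ ∑ e, entH (a e)}

lemma convex_entropyHypograph (m : E → W) : Convex ℝ (entropyHypograph m) := by
  rintro ⟨_, s⟩ ⟨a, ⟨ha, rfl⟩, hs⟩ ⟨_, s'⟩ ⟨a', ⟨ha', rfl⟩, hs'⟩ α β hα hβ hαβ
  refine ⟨α • a + β • a', ⟨fun e => ?_, ?_⟩, ?_⟩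
  · exact add_nonneg (mul_nonneg hα (ha e)) (mul_nonneg hβ (ha' e))
  · simp [add_smul, sum_add_distrib, smul_sum, mul_smul]
  · calc α * s + β * s' ≤ α * ∑ e, entH (a e) + β * ∑ e, entH (a' e) := by dsimp at hs hs'; gcongr
      _ = ∑ e, (α • entH (a e) + β • entH (a' e)) := by
        simp [sum_add_distrib, mul_sum]
      _ ≤ ∑ e, entH ((α • a + β • a') e) :=
        sum_le_sum fun e _ => concaveOn_entH.2 (ha e) (ha' e) hα hβ hαβ

variable [TopologicalSpace W] {m : E → W} {b : W}

lemma le_div_of_mem_momentPolytope {φ : StrongDual ℝ W} (hφ : ∀ e, 0 < φ (m e)) {a : E → ℝ}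
    (ha : a ∈ momentPolytope m b) (e : E) : a e ≤ φ b / φ (m e) := by
  rw [le_div_iff₀ (hφ e), ← ha.2, map_sum]
  simp only [map_smul, smul_eq_mul]
  exact single_le_sum (f := fun e => a e * φ (m e))
    (fun e _ => mul_nonneg (ha.1 e) (hφ e).le) (mem_univ e)

lemma isClosed_entropyHypograph [IsTopologicalAddGroup W] [ContinuousSMul ℝ W] [T2Space W]
    {φ : StrongDual ℝ W} (hφ : ∀ e, 0 < φ (m e)) : IsClosed (entropyHypograph m) := by
  rw [isClosed_iff_ultrafilter]
  intro p 𝒰 h𝒰 hmem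
  choose! a ha hle using fun q (hq : q ∈ entropyHypograph m) => hq
  have hfst : Tendsto Prod.fst 𝒰 (𝓝 p.1) := (continuous_fst.tendsto p).mono_left h𝒰
  have hsnd : Tendsto Prod.snd 𝒰 (𝓝 p.2) := (continuous_snd.tendsto p).mono_left h𝒰
  have hbdd : ∀ᶠ q in 𝒰, a q ∈ Set.univ.pi fun e => Set.Icc 0 ((φ p.1 + 1) / φ (m e)) := by
    have hlt : ∀ᶠ q : W × ℝ in 𝒰, φ q.1 < φ p.1 + 1 :=
      ((φ.continuous.tendsto p.1).comp hfst).eventually_lt_const (lt_add_one _)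
    filter_upwards [hmem, hlt] with q hq hlt e _
    have := hφ e
    exact ⟨(ha q hq).1 e, (le_div_of_mem_momentPolytope hφ (ha q hq) e).trans (by gcongr)⟩
  obtain ⟨A, hA, hlim : Tendsto a 𝒰 (𝓝 A)⟩ :=
    (isCompact_univ_pi fun _ => isCompact_Icc).ultrafilter_le_nhds' (𝒰.map a) hbdd
  have hmoment : Tendsto (fun q => ∑ e, a q e • m e) 𝒰 (𝓝 (∑ e, A e • m e)) :=
    ((by fun_prop : Continuous fun a : E → ℝ => ∑ e, a e • m e).tendsto A).comp hlim
  have hentropy : Tendsto (fun q => ∑ e, entH (a q e)) 𝒰 (𝓝 (∑ e, entH (A e))) :=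
    ((continuous_finsetSum _ fun e _ => continuous_entH.comp (continuous_apply e)).tendsto A).comp
      hlim
  refine ⟨A, ⟨fun e => (hA e (Set.mem_univ e)).1, ?_⟩, ?_⟩
  · exact tendsto_nhds_unique (hmoment.congr' (mem_of_superset hmem fun q hq => (ha q hq).2)) hfst
  · exact le_of_tendsto_of_tendsto hsnd hentropy (mem_of_superset hmem hle)

/-- The Lagrange dual function of entropy maximization over `momentPolytope m b`; the multiplier
`φ` is feasible if it is positive on every `m e`. -/
noncomputable def entropyDual (m : E → W) (b : W) (φ : StrongDual ℝ W) : ℝ :=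
  ∑ e, entHConj (φ (m e)) + φ b

lemma sum_entH_le_entropyDual {a : E → ℝ} (ha : a ∈ momentPolytope m b) {φ : StrongDual ℝ W}
    (hφ : ∀ e, 0 < φ (m e)) : ∑ e, entH (a e) ≤ entropyDual m b φ := by
  rw [entropyDual, ← ha.2, map_sum, ← sum_add_distrib]
  exact sum_le_sum fun e _ => by
    simpa using entH_le_entHConj_add_mul (ha.1 e) (hφ e)

lemma pos_of_forall_sum_entH_sub_mul_lt {w : E → ℝ} {k : ℝ}
    (h : ∀ a : E → ℝ, (∀ e, 0 ≤ a e) → ∑ e, (entH (a e) - a e * w e) < k) (e : E) : 0 < w e := by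
  classical
  by_contra! hw
  obtain ⟨t, hk, ht⟩ :=
    ((tendsto_entH_atTop.eventually_ge_atTop k).and (eventually_ge_atTop 0)).exists
  have hsingle : ∑ e', (entH ((Pi.single e t : E → ℝ) e') - (Pi.single e t : E → ℝ) e' * w e') =
      entH t - t * w e := by
    rw [sum_eq_single e] <;> simp +contextual [entH_zero]
  have := h (Pi.single e t) ((Pi.single_nonneg (α := fun _ => ℝ)).2 ht)
  rw [hsingle] at this
  linarith [mul_nonpos_of_nonneg_of_nonpos ht hw]

lemma sum_entHConj_lt_of_forall_sum_entH_sub_mul_lt {w : E → ℝ} {k : ℝ}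
    (h : ∀ a : E → ℝ, (∀ e, 0 ≤ a e) → ∑ e, (entH (a e) - a e * w e) < k) :
    ∑ e, entHConj (w e) < k := by
  choose a ha haw using fun e =>
    exists_entH_eq_entHConj_add_mul (pos_of_forall_sum_entH_sub_mul_lt h e)
  simpa [haw] using h a ha

variable [IsTopologicalAddGroup W] [ContinuousSMul ℝ W] [LocallyConvexSpace ℝ W] [T2Space W]

/-- A hyperplane separating `(b, c)` from the hypograph of the value function has a nonzero
`ℝ`-component because `b` is feasible; its slope is the multiplier. -/
lemma exists_forall_sum_entH_sub_mul_lt {φ₀ : StrongDual ℝ W} (hφ₀ : ∀ e, 0 < φ₀ (m e))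
    (hne : (momentPolytope m b).Nonempty) {c : ℝ}
    (hc : ∀ a ∈ momentPolytope m b, ∑ e, entH (a e) < c) :
    ∃ φ : StrongDual ℝ W, ∀ a : E → ℝ, (∀ e, 0 ≤ a e) →
      ∑ e, (entH (a e) - a e * φ (m e)) < c - φ b := by
  have hnot : (b, c) ∉ entropyHypograph m := fun ⟨a, ha, hca⟩ => (hc a ha).not_ge hca
  obtain ⟨ψ, k, hlt, hk⟩ := geometric_hahn_banach_closed_point (convex_entropyHypograph m)
    (isClosed_entropyHypograph hφ₀) hnot
  set l := ψ (0, 1)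
  set χ : StrongDual ℝ W := ψ.comp (ContinuousLinearMap.inl ℝ W ℝ)
  have hψ : ∀ y t, ψ (y, t) = χ y + t * l := fun y t => by
    rw [← smul_eq_mul, ← map_smul]
    simp [χ, ← map_add]
  have hsep : ∀ a : E → ℝ, (∀ e, 0 ≤ a e) →
      χ (∑ e, a e • m e) + (∑ e, entH (a e)) * l < χ b + c * l := fun a ha => by
    have := (hlt (∑ e, a e • m e, ∑ e, entH (a e)) ⟨a, ⟨ha, rfl⟩, le_rfl⟩).trans hk
    rwa [hψ, hψ] at this
  have hl : 0 < l := by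
    obtain ⟨a₀, ha₀, rfl⟩ := hne
    exact (pos_iff_pos_of_mul_pos (a := c - ∑ e, entH (a₀ e)) (by linarith [hsep a₀ ha₀])).1
      (sub_pos.2 (hc a₀ ⟨ha₀, rfl⟩))
  refine ⟨-l⁻¹ • χ, fun a ha => ?_⟩
  have hslope : ∑ e, entH (a e) + l⁻¹ * χ (∑ e, a e • m e) < c + l⁻¹ * χ b := by
    field_simp
    linarith [hsep a ha]
  simpa [sum_sub_distrib, sum_add_distrib, mul_sum, mul_left_comm] using hslope

theorem exists_entropyDual_lt {φ₀ : StrongDual ℝ W} (hφ₀ : ∀ e, 0 < φ₀ (m e))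
    (hne : (momentPolytope m b).Nonempty) {c : ℝ}
    (hc : ∀ a ∈ momentPolytope m b, ∑ e, entH (a e) < c) :
    ∃ φ : StrongDual ℝ W, (∀ e, 0 < φ (m e)) ∧ entropyDual m b φ < c := by
  obtain ⟨φ, hφ⟩ := exists_forall_sum_entH_sub_mul_lt hφ₀ hne hc
  exact ⟨φ, pos_of_forall_sum_entH_sub_mul_lt hφ,
    lt_sub_iff_add_lt.1 (sum_entHConj_lt_of_forall_sum_entH_sub_mul_lt hφ)⟩

theorem sInf_entropyDual_eq_sSup_entropy {φ₀ : StrongDual ℝ W} (hφ₀ : ∀ e, 0 < φ₀ (m e))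
    (hne : (momentPolytope m b).Nonempty) :
    sInf (entropyDual m b '' {φ | ∀ e, 0 < φ (m e)}) =
      sSup ((fun a => ∑ e, entH (a e)) '' momentPolytope m b) := by
  have hweak : ∀ a ∈ momentPolytope m b, ∀ φ : StrongDual ℝ W, (∀ e, 0 < φ (m e)) →
      ∑ e, entH (a e) ≤ entropyDual m b φ := fun a ha φ => sum_entH_le_entropyDual ha
  obtain ⟨a₀, ha₀⟩ := hne
  apply le_antisymm
  · refine le_of_forall_gt fun c hc => ?_
    have hbdd : BddAbove ((fun a => ∑ e, entH (a e)) '' momentPolytope m b) :=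
      ⟨entropyDual m b φ₀, Set.forall_mem_image.2 fun a ha => hweak a ha φ₀ hφ₀⟩
    obtain ⟨φ, hφ, hlt⟩ := exists_entropyDual_lt hφ₀ ⟨a₀, ha₀⟩ fun a ha =>
      (le_csSup hbdd ⟨a, ha, rfl⟩).trans_lt hc
    exact (csInf_le ⟨_, Set.forall_mem_image.2 (hweak a₀ ha₀)⟩ ⟨φ, hφ, rfl⟩).trans_lt hlt
  · exact csSup_le ⟨_, a₀, ha₀, rfl⟩ <| Set.forall_mem_image.2 fun a ha =>
      le_csInf ⟨_, φ₀, hφ₀, rfl⟩ <| Set.forall_mem_image.2 (hweak a ha)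

end MomentDuality

section Transportation

variable {I J : Type*} (S : I → J → Prop)

/-- The matrix unit of a cell of `S`, recorded by its row sums and its column sums, so that the
moment of a weight on the cells consists of the margins of the corresponding matrix. -/
def cellMargins [DecidableEq I] [DecidableEq J] (e : {p : I × J // S p.1 p.2}) :
    (I → ℝ) × (J → ℝ) :=
  (Pi.single e.1.1 1, Pi.single e.1.2 1)

lemma exists_eq_exp_neg {x : I → ℝ} (hx : ∀ i, 0 < x i) :
    ∃ u : I → ℝ, x = fun i => Real.exp (-u i) :=
  ⟨fun i => -Real.log (x i), by simp [Real.exp_log, hx]⟩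

variable [Fintype I] [Fintype J]

/-- The nonnegative `I × J` matrices supported on `S` with row sums `r` and column sums `c`. -/
def transportPolytope (r : I → ℝ) (c : J → ℝ) : Set (I → J → ℝ) :=
  {A | (∀ i j, 0 ≤ A i j) ∧ (∀ i j, ¬ S i j → A i j = 0) ∧
    (∀ i, ∑ j, A i j = r i) ∧ ∀ j, ∑ i, A i j = c j}

/-- The generating function of the matrices supported on `S`, in row variables `x` and column
variables `y`, divided by the monomial with exponents `r` and `c`. -/
noncomputable def capacityObjective [DecidableRel S] (r : I → ℝ) (c : J → ℝ) (x : I → ℝ)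
    (y : J → ℝ) : ℝ :=
  (∏ i, ∏ j, if S i j then (1 - x i * y j)⁻¹ else 1) * (∏ i, x i ^ (-r i)) * ∏ j, y j ^ (-c j)

/-- The functional with coefficients `u` and `v` on pairs of margins. -/
noncomputable def marginPairing (u : I → ℝ) (v : J → ℝ) : StrongDual ℝ ((I → ℝ) × (J → ℝ)) :=
  ((dotProductBilin ℝ ℝ u).coprod (dotProductBilin ℝ ℝ v)).toContinuousLinearMap

lemma marginPairing_apply (u : I → ℝ) (v : J → ℝ) (p : (I → ℝ) × (J → ℝ)) :
    marginPairing u v p = u ⬝ᵥ p.1 + v ⬝ᵥ p.2 := by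
  simp [marginPairing]

lemma exists_eq_marginPairing (φ : StrongDual ℝ ((I → ℝ) × (J → ℝ))) :
    ∃ u v, φ = marginPairing u v := by
  classical
  obtain ⟨u, hu⟩ := (dotProductEquiv ℝ I).surjective (φ.toLinearMap ∘ₗ LinearMap.inl ℝ _ _)
  obtain ⟨v, hv⟩ := (dotProductEquiv ℝ J).surjective (φ.toLinearMap ∘ₗ LinearMap.inr ℝ _ _)
  refine ⟨u, v, ContinuousLinearMap.ext fun p => ?_⟩
  have hfst : u ⬝ᵥ p.1 = φ (p.1, 0) := LinearMap.congr_fun hu p.1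
  have hsnd : v ⬝ᵥ p.2 = φ (0, p.2) := LinearMap.congr_fun hv p.2
  rw [marginPairing_apply, hfst, hsnd, ← map_add, Prod.mk_add_mk, add_zero, zero_add]

variable {S}

lemma marginPairing_cellMargins [DecidableEq I] [DecidableEq J] (u : I → ℝ) (v : J → ℝ)
    (e : {p : I × J // S p.1 p.2}) :
    marginPairing u v (cellMargins S e) = u e.1.1 + v e.1.2 := by
  simp [marginPairing_apply, cellMargins]

variable [DecidableRel S] {r : I → ℝ} {c : J → ℝ}

@[to_additive]
lemma prod_cells {R : Type*} [CommMonoid R] {G : I → J → R}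
    (hG : ∀ i j, ¬ S i j → G i j = 1) :
    ∏ e : {p : I × J // S p.1 p.2}, G e.1.1 e.1.2 = ∏ i, ∏ j, G i j := by
  rw [← Fintype.prod_prod_type']
  exact Fintype.prod_of_injective _ Subtype.val_injective _ _
    (fun p hp => hG _ _ fun h => hp ⟨⟨p, h⟩, rfl⟩) fun _ => rfl

section DecidableEq

variable [DecidableEq I] [DecidableEq J]

lemma sum_smul_cellMargins {A : I → J → ℝ} (hA : ∀ i j, ¬ S i j → A i j = 0) :
    ∑ e, A e.1.1 e.1.2 • cellMargins S e = (fun i => ∑ j, A i j, fun j => ∑ i, A i j) := by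
  simp only [cellMargins]
  rw [sum_cells (G := fun i j => A i j • ((Pi.single i 1, Pi.single j 1) : (I → ℝ) × (J → ℝ)))
    fun i j h => by simp [hA i j h]]
  refine Prod.ext (funext fun i => ?_) (funext fun j => ?_)
  · simp [Prod.fst_sum, Finset.sum_apply, Pi.single_apply]
  · simp [Prod.snd_sum, Finset.sum_apply, Pi.single_apply]

lemma mem_transportPolytope_iff {A : I → J → ℝ} (hA : ∀ i j, ¬ S i j → A i j = 0) :
    A ∈ transportPolytope S r c ↔
      (fun e : {p : I × J // S p.1 p.2} => A e.1.1 e.1.2) ∈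
        momentPolytope (cellMargins S) (r, c) := by
  simp only [transportPolytope, momentPolytope, Set.mem_ofPred_eq, sum_smul_cellMargins hA,
    Prod.mk.injEq, funext_iff, Subtype.forall, Prod.forall]
  refine ⟨fun ⟨h0, _, h⟩ => ⟨fun i j _ => h0 i j, h⟩, fun ⟨h0, h⟩ => ⟨fun i j => ?_, hA, h⟩⟩
  by_cases hij : S i j
  · exact h0 i j hij
  · exact (hA i j hij).ge

lemma image_entropy_transportPolytope :
    (fun A => ∑ i, ∑ j, entH (A i j)) '' transportPolytope S r c =
      (fun a => ∑ e, entH (a e)) '' momentPolytope (cellMargins S) (r, c) := by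
  have hentropy : ∀ A : I → J → ℝ, (∀ i j, ¬ S i j → A i j = 0) →
      ∑ e : {p : I × J // S p.1 p.2}, entH (A e.1.1 e.1.2) = ∑ i, ∑ j, entH (A i j) :=
    fun A hA => sum_cells (G := fun i j => entH (A i j)) fun i j h => by rw [hA i j h, entH_zero]
  apply Set.Subset.antisymm
  · rintro _ ⟨A, hA, rfl⟩
    exact ⟨_, (mem_transportPolytope_iff hA.2.1).1 hA, hentropy A hA.2.1⟩
  · rintro _ ⟨a, ha, rfl⟩
    let A : I → J → ℝ := fun i j => if h : S i j then a ⟨(i, j), h⟩ else 0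
    have hA : ∀ i j, ¬ S i j → A i j = 0 := fun i j h => dif_neg h
    have hAa : (fun e : {p : I × J // S p.1 p.2} => A e.1.1 e.1.2) = a :=
      funext fun e => dif_pos e.2
    refine ⟨A, (mem_transportPolytope_iff hA).2 (hAa ▸ ha), (hentropy A hA).symm.trans ?_⟩
    simp only [← hAa]

lemma capacityObjective_exp_neg {u : I → ℝ} {v : J → ℝ}
    (huv : ∀ e, 0 < marginPairing u v (cellMargins S e)) :
    capacityObjective S r c (fun i => Real.exp (-u i)) (fun j => Real.exp (-v j)) =
      Real.exp (entropyDual (cellMargins S) (r, c) (marginPairing u v)) := by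
  have hcells : ∏ e : {p : I × J // S p.1 p.2},
      Real.exp (entHConj (marginPairing u v (cellMargins S e))) =
        ∏ i, ∏ j, if S i j then (1 - Real.exp (-u i) * Real.exp (-v j))⁻¹ else 1 := by
    rw [← prod_cells fun i j h => if_neg h]
    refine prod_congr rfl fun e _ => ?_
    rw [if_pos e.2, exp_entHConj (huv e), marginPairing_cellMargins, neg_add, Real.exp_add]
  have hlinear : Real.exp (marginPairing u v (r, c)) =
      (∏ i, Real.exp (-u i) ^ (-r i)) * ∏ j, Real.exp (-v j) ^ (-c j) := by
    simp only [marginPairing_apply, dotProduct, Real.exp_add, Real.exp_sum, ← Real.exp_mul,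
      neg_mul_neg]
  rw [capacityObjective, entropyDual, Real.exp_add, Real.exp_sum, hcells, hlinear, mul_assoc]

lemma setOf_capacityObjective_eq_image_exp_entropyDual :
    {κ : ℝ | ∃ (x : I → ℝ) (y : J → ℝ), (∀ i, 0 < x i) ∧ (∀ j, 0 < y j) ∧
        (∀ i j, S i j → x i * y j < 1) ∧ κ = capacityObjective S r c x y} =
      Real.exp '' (entropyDual (cellMargins S) (r, c) '' {φ | ∀ e, 0 < φ (cellMargins S e)}) := by
  have hfeasible : ∀ (u : I → ℝ) (v : J → ℝ), (∀ e, 0 < marginPairing u v (cellMargins S e)) ↔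
      ∀ i j, S i j → Real.exp (-u i) * Real.exp (-v j) < 1 := fun u v => by
    simp only [marginPairing_cellMargins, Subtype.forall, Prod.forall, ← Real.exp_add, ← neg_add,
      Real.exp_lt_one_iff, neg_lt_zero]
  apply Set.Subset.antisymm
  · rintro _ ⟨x, y, hx, hy, hxy, rfl⟩
    obtain ⟨u, rfl⟩ := exists_eq_exp_neg hx
    obtain ⟨v, rfl⟩ := exists_eq_exp_neg hy
    have huv := (hfeasible u v).2 hxy
    exact ⟨_, ⟨marginPairing u v, huv, rfl⟩, (capacityObjective_exp_neg huv).symm⟩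
  · rintro _ ⟨_, ⟨φ, hφ, rfl⟩, rfl⟩
    obtain ⟨u, v, rfl⟩ := exists_eq_marginPairing φ
    exact ⟨_, _, fun _ => Real.exp_pos _, fun _ => Real.exp_pos _, (hfeasible u v).1 hφ,
      (capacityObjective_exp_neg hφ).symm⟩

end DecidableEq

theorem sInf_capacityObjective_eq_sSup_exp_entropy (hne : (transportPolytope S r c).Nonempty) :
    sInf {κ : ℝ | ∃ (x : I → ℝ) (y : J → ℝ), (∀ i, 0 < x i) ∧ (∀ j, 0 < y j) ∧
        (∀ i j, S i j → x i * y j < 1) ∧ κ = capacityObjective S r c x y} =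
      sSup (Real.exp '' ((fun A => ∑ i, ∑ j, entH (A i j)) '' transportPolytope S r c)) := by
  classical
  let m := cellMargins S
  obtain ⟨A, hA⟩ := hne
  have hmoment := (mem_transportPolytope_iff hA.2.1).1 hA
  have hφ₀ : ∀ e, 0 < marginPairing (1 : I → ℝ) (1 : J → ℝ) (m e) := fun e => by
    simp [m, marginPairing_cellMargins]
  have hentropy : ((fun a => ∑ e, entH (a e)) '' momentPolytope m (r, c)).Nonempty :=
    ⟨_, _, hmoment, rfl⟩
  have hentropyBdd : BddAbove ((fun a => ∑ e, entH (a e)) '' momentPolytope m (r, c)) :=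
    ⟨_, Set.forall_mem_image.2 fun a ha => sum_entH_le_entropyDual ha hφ₀⟩
  have hdual : (entropyDual m (r, c) '' {φ | ∀ e, 0 < φ (m e)}).Nonempty := ⟨_, _, hφ₀, rfl⟩
  have hdualBdd : BddBelow (entropyDual m (r, c) '' {φ | ∀ e, 0 < φ (m e)}) :=
    ⟨_, Set.forall_mem_image.2 fun φ => sum_entH_le_entropyDual hmoment⟩
  calc sInf {κ : ℝ | ∃ (x : I → ℝ) (y : J → ℝ), (∀ i, 0 < x i) ∧ (∀ j, 0 < y j) ∧
          (∀ i j, S i j → x i * y j < 1) ∧ κ = capacityObjective S r c x y}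
      = Real.exp (sInf (entropyDual m (r, c) '' {φ | ∀ e, 0 < φ (m e)})) := by
        rw [setOf_capacityObjective_eq_image_exp_entropyDual,
          Real.exp_monotone.map_csInf_of_continuousAt Real.continuous_exp.continuousAt hdual
            hdualBdd]
    _ = Real.exp (sSup ((fun a => ∑ e, entH (a e)) '' momentPolytope m (r, c))) := by
        rw [sInf_entropyDual_eq_sSup_entropy hφ₀ ⟨_, hmoment⟩]
    _ = sSup (Real.exp '' ((fun A => ∑ i, ∑ j, entH (A i j)) '' transportPolytope S r c)) := by
        rw [Real.exp_monotone.map_csSup_of_continuousAt Real.continuous_exp.continuousAt hentropy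
          hentropyBdd, ← image_entropy_transportPolytope]

end Transportation

section Restriction

variable {I J I' J' : Type*} {ι : I' → I} {κ : J' → J}

lemma exists_comp_eq_and_eq_zero (hι : ι.Injective) (hκ : κ.Injective) (A' : I' → J' → ℝ) :
    ∃ A : I → J → ℝ, (fun i j => A (ι i) (κ j)) = A' ∧ (∀ i ∉ Set.range ι, ∀ j, A i j = 0) ∧
      ∀ j ∉ Set.range κ, ∀ i, A i j = 0 := by
  refine ⟨Function.extend ι (fun i => Function.extend κ (A' i) 0) 0, ?_, fun i hi j => ?_,
    fun j hj i => ?_⟩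
  · simp only [hι.extend_apply, hκ.extend_apply]
  · rw [Function.extend_apply' _ _ _ hi]
    rfl
  · by_cases hi : i ∈ Set.range ι
    · obtain ⟨i, rfl⟩ := hi
      rw [hι.extend_apply, Function.extend_apply' _ _ _ hj]
      rfl
    · rw [Function.extend_apply' _ _ _ hi]
      rfl

variable [Fintype I] [Fintype J] {S : I → J → Prop} {r : I → ℝ} {c : J → ℝ}

lemma eq_zero_of_rowSum_eq_zero {A : I → J → ℝ} (hA : A ∈ transportPolytope S r c) {i : I}
    (hi : r i = 0) (j : J) : A i j = 0 :=
  (sum_eq_zero_iff_of_nonneg fun j _ => hA.1 i j).1 ((hA.2.2.1 i).trans hi) j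
    (mem_univ j)

lemma eq_zero_of_colSum_eq_zero {A : I → J → ℝ} (hA : A ∈ transportPolytope S r c) {j : J}
    (hj : c j = 0) (i : I) : A i j = 0 :=
  (sum_eq_zero_iff_of_nonneg fun i _ => hA.1 i j).1 ((hA.2.2.2 j).trans hj) i
    (mem_univ i)

variable [Fintype I'] [Fintype J'] {S' : I' → J' → Prop}

lemma sum_sum_comp_of_injective (hι : ι.Injective) (hκ : κ.Injective) {G : I → J → ℝ}
    (hrow : ∀ i ∉ Set.range ι, ∀ j, G i j = 0) (hcol : ∀ j ∉ Set.range κ, ∀ i, G i j = 0) :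
    ∑ i, ∑ j, G (ι i) (κ j) = ∑ i, ∑ j, G i j :=
  Fintype.sum_of_injective ι hι _ _ (fun i hi => sum_eq_zero fun j _ => hrow i hi j)
    fun i => Fintype.sum_of_injective κ hκ _ _ (fun j hj => hcol j hj (ι i)) fun _ => rfl

lemma comp_mem_transportPolytope_iff (hι : ι.Injective) (hκ : κ.Injective)
    (hS : ∀ i j, S' i j ↔ S (ι i) (κ j)) (hr : ∀ i ∉ Set.range ι, r i = 0)
    (hc : ∀ j ∉ Set.range κ, c j = 0) {A : I → J → ℝ}
    (hrow : ∀ i ∉ Set.range ι, ∀ j, A i j = 0) (hcol : ∀ j ∉ Set.range κ, ∀ i, A i j = 0) :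
    (fun i j => A (ι i) (κ j)) ∈ transportPolytope S' (r ∘ ι) (c ∘ κ) ↔
      A ∈ transportPolytope S r c := by
  have hrowSum : ∀ i, ∑ j, A i (κ j) = ∑ j, A i j := fun i =>
    Fintype.sum_of_injective κ hκ _ _ (fun j hj => hcol j hj i) fun _ => rfl
  have hcolSum : ∀ j, ∑ i, A (ι i) j = ∑ i, A i j := fun j =>
    Fintype.sum_of_injective ι hι _ _ (fun i hi => hrow i hi j) fun _ => rfl
  simp only [transportPolytope, Set.mem_ofPred_eq, hS, hrowSum, hcolSum, Function.comp_apply]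
  have hcases : ∀ i j, A i j = 0 ∨ ∃ i' j', ι i' = i ∧ κ j' = j := fun i j => by
    by_cases hi : i ∈ Set.range ι
    · by_cases hj : j ∈ Set.range κ
      · exact .inr ⟨_, _, hi.choose_spec, hj.choose_spec⟩
      · exact .inl (hcol j hj i)
    · exact .inl (hrow i hi j)
  constructor
  · rintro ⟨hnonneg, hsupp, hsumr, hsumc⟩
    refine ⟨fun i j => ?_, fun i j hij => ?_, fun i => ?_, fun j => ?_⟩
    · obtain hzero | ⟨i', j', rfl, rfl⟩ := hcases i j
      exacts [hzero.ge, hnonneg i' j']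
    · obtain hzero | ⟨i', j', rfl, rfl⟩ := hcases i j
      exacts [hzero, hsupp i' j' hij]
    · by_cases hi : i ∈ Set.range ι
      · obtain ⟨i', rfl⟩ := hi
        exact hsumr i'
      · rw [hr i hi, sum_eq_zero fun j _ => hrow i hi j]
    · by_cases hj : j ∈ Set.range κ
      · obtain ⟨j', rfl⟩ := hj
        exact hsumc j'
      · rw [hc j hj, sum_eq_zero fun i _ => hcol j hj i]
  · rintro ⟨hnonneg, hsupp, hsumr, hsumc⟩
    exact ⟨fun _ _ => hnonneg _ _, fun _ _ => hsupp _ _, fun _ => hsumr _, fun _ => hsumc _⟩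

lemma image_entropy_transportPolytope_comp (hι : ι.Injective) (hκ : κ.Injective)
    (hS : ∀ i j, S' i j ↔ S (ι i) (κ j)) (hr : ∀ i ∉ Set.range ι, r i = 0)
    (hc : ∀ j ∉ Set.range κ, c j = 0) :
    (fun A => ∑ i, ∑ j, entH (A i j)) '' transportPolytope S' (r ∘ ι) (c ∘ κ) =
      (fun A => ∑ i, ∑ j, entH (A i j)) '' transportPolytope S r c := by
  have hentropy : ∀ A : I → J → ℝ, (∀ i ∉ Set.range ι, ∀ j, A i j = 0) →
      (∀ j ∉ Set.range κ, ∀ i, A i j = 0) →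
        ∑ i, ∑ j, entH (A (ι i) (κ j)) = ∑ i, ∑ j, entH (A i j) := fun A hrow hcol =>
    sum_sum_comp_of_injective hι hκ (G := fun i j => entH (A i j))
      (fun i hi j => by rw [hrow i hi j, entH_zero]) fun j hj i => by rw [hcol j hj i, entH_zero]
  apply Set.Subset.antisymm
  · rintro _ ⟨A', hA', rfl⟩
    obtain ⟨A, rfl, hrow, hcol⟩ := exists_comp_eq_and_eq_zero hι hκ A'
    exact ⟨A, (comp_mem_transportPolytope_iff hι hκ hS hr hc hrow hcol).1 hA',
      (hentropy A hrow hcol).symm⟩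
  · rintro _ ⟨A, hA, rfl⟩
    have hrow := fun i hi => eq_zero_of_rowSum_eq_zero hA (hr i hi)
    have hcol := fun j hj => eq_zero_of_colSum_eq_zero hA (hc j hj)
    exact ⟨_, (comp_mem_transportPolytope_iff hι hκ hS hr hc hrow hcol).2 hA,
      hentropy A hrow hcol⟩

end Restriction

section Flow

variable {n : ℕ} {N : Fin (n + 1) → ℝ} {f : Fin (n + 1) → Fin (n + 1) → ℝ}

lemma mem_flowPolytope_iff : f ∈ FlowPolytope n N ↔
    (∀ i j, 0 ≤ f i j) ∧ (∀ i j, ¬ i < j → f i j = 0) ∧ ∀ i, ∑ j, f i j - ∑ k, f k i = N i := by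
  have hite : (∀ i j, ¬ i < j → f i j = 0) → ∀ i j, (if i < j then f i j else 0) = f i j :=
    fun hf i j => ite_eq_left_iff.2 fun hij => (hf i j hij).symm
  constructor
  · rintro ⟨hnonneg, hsupp, hnet⟩
    simp only [hite hsupp] at hnet
    refine ⟨fun i j => ?_, hsupp, hnet⟩
    by_cases hij : i < j
    exacts [hnonneg i j hij, (hsupp i j hij).ge]
  · rintro ⟨hnonneg, hsupp, hnet⟩
    refine ⟨fun i j _ => hnonneg i j, hsupp, ?_⟩
    simpa only [hite hsupp] using hnet

lemma sum_eq_zero_of_mem_flowPolytope (hf : f ∈ FlowPolytope n N) : ∑ i, N i = 0 := by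
  simp only [← (mem_flowPolytope_iff.1 hf).2.2, sum_sub_distrib]
  rw [sum_comm, sub_self]

lemma sum_Iio_netflow_eq_sum_cut (hf : f ∈ FlowPolytope n N) (m : Fin (n + 1)) :
    ∑ i ∈ Iio m, N i = ∑ i ∈ Iio m, ∑ j ∈ Ici m, f i j := by
  obtain ⟨-, hsupp, hnet⟩ := mem_flowPolytope_iff.1 hf
  have hin : ∑ i ∈ Iio m, ∑ k, f k i = ∑ i ∈ Iio m, ∑ j ∈ Iio m, f i j := by
    rw [sum_comm (s := Iio m) (t := Iio m)]
    refine sum_congr rfl fun i hi => (sum_subset (subset_univ _) ?_).symm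
    exact fun k _ hk => hsupp k i fun hki =>
      hk (mem_Iio.2 (hki.trans (mem_Iio.1 hi)))
  simp only [← hnet, sum_sub_distrib, hin]
  rw [sub_eq_iff_eq_add, ← sum_add_distrib]
  refine sum_congr rfl fun i _ => ?_
  have hcompl : Ici m = (Iio m)ᶜ := by
    ext k
    simp
  rw [hcompl, sum_compl_add_sum]

/-- The total flow passing over the vertex `m`, expressed through the flow into `m` as in the second
sum of `flowEntropy`. -/
def flowSlack (N : Fin (n + 1) → ℝ) (f : Fin (n + 1) → Fin (n + 1) → ℝ) (m : Fin (n + 1)) : ℝ :=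
  ∑ i ∈ Iio m, (N i - f i m)

lemma flowSlack_eq_sum_sub_sum (hsupp : ∀ i j, ¬ i < j → f i j = 0) (m : Fin (n + 1)) :
    flowSlack N f m = ∑ i ∈ Iio m, N i - ∑ i, f i m := by
  rw [flowSlack, sum_sub_distrib]
  congr 1
  exact sum_subset (subset_univ _) fun i _ hi =>
    hsupp i m fun him => hi (mem_Iio.2 him)

lemma flowSlack_eq_sum_bypass (hf : f ∈ FlowPolytope n N) (m : Fin (n + 1)) :
    flowSlack N f m = ∑ i ∈ Iio m, ∑ j ∈ Ioi m, f i j := by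
  rw [flowSlack, sum_sub_distrib, sum_Iio_netflow_eq_sum_cut hf, ← sum_sub_distrib]
  refine sum_congr rfl fun i _ => ?_
  rw [← sum_Ioi_add_eq_sum_Ici, add_sub_cancel_right]

lemma flowSlack_nonneg (hf : f ∈ FlowPolytope n N) (m : Fin (n + 1)) : 0 ≤ flowSlack N f m := by
  rw [flowSlack_eq_sum_bypass hf]
  exact sum_nonneg fun i _ => sum_nonneg fun j _ => (mem_flowPolytope_iff.1 hf).1 i j

lemma flowSlack_eq_zero_of_not_interior (hf : f ∈ FlowPolytope n N) {m : Fin (n + 1)}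
    (hm : ¬ (0 < (m : ℕ) ∧ (m : ℕ) < n)) : flowSlack N f m = 0 := by
  rw [flowSlack_eq_sum_bypass hf]
  obtain rfl | rfl : m = 0 ∨ m = Fin.last n := by
    simp only [Fin.ext_iff, Fin.val_zero, Fin.val_last]
    omega
  · exact sum_eq_zero fun i hi => absurd (mem_Iio.1 hi) i.not_lt_zero
  · exact sum_eq_zero fun i _ => sum_eq_zero fun j hj =>
      absurd (mem_Ioi.1 hj) j.le_last.not_gt

/-- The flow matrix with the slacks placed on the diagonal; its margins depend only on the
netflow. -/
def flowCompletion (N : Fin (n + 1) → ℝ) (f : Fin (n + 1) → Fin (n + 1) → ℝ) (i j : Fin (n + 1)) :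
    ℝ :=
  f i j + if i = j then flowSlack N f i else 0

lemma flowCompletion_of_lt {i j : Fin (n + 1)} (hij : i < j) : flowCompletion N f i j = f i j := by
  simp [flowCompletion, hij.ne]

lemma flowCompletion_self (hsupp : ∀ i j, ¬ i < j → f i j = 0) (i : Fin (n + 1)) :
    flowCompletion N f i i = flowSlack N f i := by
  simp [flowCompletion, hsupp]

lemma flowCompletion_of_gt (hsupp : ∀ i j, ¬ i < j → f i j = 0) {i j : Fin (n + 1)} (hij : j < i) :
    flowCompletion N f i j = 0 := by
  simp [flowCompletion, hij.ne', hsupp i j hij.not_gt]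

lemma flowCompletion_mem_transportPolytope (hf : f ∈ FlowPolytope n N) :
    flowCompletion N f ∈
      transportPolytope (· ≤ ·) (fun i => ∑ k ∈ Iic i, N k) (fun j => ∑ k ∈ Iio j, N k) := by
  obtain ⟨hnonneg, hsupp, hnet⟩ := mem_flowPolytope_iff.1 hf
  refine ⟨fun i j => ?_, fun i j hij => flowCompletion_of_gt hsupp (not_le.1 hij), fun i => ?_,
    fun j => ?_⟩
  · have := flowSlack_nonneg hf i
    have := hnonneg i j
    unfold flowCompletion
    split_ifs <;> positivity
  · simp only [flowCompletion, sum_add_distrib, sum_ite_eq, mem_univ, if_true,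
      flowSlack_eq_sum_sub_sum hsupp, ← sum_Iio_add_eq_sum_Iic, ← hnet i]
    ring
  · simp only [flowCompletion, sum_add_distrib, sum_ite_eq', mem_univ, if_true,
      flowSlack_eq_sum_sub_sum hsupp]
    ring

lemma exists_flowCompletion_eq {B : Fin (n + 1) → Fin (n + 1) → ℝ}
    (hB : B ∈ transportPolytope (· ≤ ·) (fun i => ∑ k ∈ Iic i, N k) fun j => ∑ k ∈ Iio j, N k) :
    ∃ f ∈ FlowPolytope n N, flowCompletion N f = B := by
  obtain ⟨hnonneg, hsupp, hrow, hcol⟩ := hB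
  let f : Fin (n + 1) → Fin (n + 1) → ℝ := fun i j => B i j - if i = j then B i i else 0
  have hfself : ∀ i, f i i = 0 := fun i => by simp [f]
  have hfne : ∀ {i j}, i ≠ j → f i j = B i j := fun hij => by simp [f, hij]
  have hfsupp : ∀ i j, ¬ i < j → f i j = 0 := fun i j hij => by
    obtain rfl | hji := (not_lt.1 hij).eq_or_lt
    exacts [hfself _, (hfne hji.ne').trans (hsupp i j hji.not_ge)]
  have hfcol : ∀ j, ∑ i, f i j = ∑ k ∈ Iio j, N k - B j j := fun j => by
    simp [f, sum_sub_distrib, hcol]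
  have hfrow : ∀ i, ∑ j, f i j = ∑ k ∈ Iic i, N k - B i i := fun i => by
    simp [f, sum_sub_distrib, hrow]
  refine ⟨f, mem_flowPolytope_iff.2 ⟨fun i j => ?_, hfsupp, fun i => ?_⟩, ?_⟩
  · obtain rfl | hij := eq_or_ne i j
    exacts [(hfself i).ge, (hnonneg i j).trans_eq (hfne hij).symm]
  · rw [hfrow, hfcol, ← sum_Iio_add_eq_sum_Iic]
    ring
  · ext i j
    rw [flowCompletion, flowSlack_eq_sum_sub_sum hfsupp, hfcol, sub_sub_cancel]
    exact sub_add_cancel _ _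

lemma image_flowCompletion : flowCompletion N '' FlowPolytope n N =
    transportPolytope (· ≤ ·) (fun i => ∑ k ∈ Iic i, N k) fun j => ∑ k ∈ Iio j, N k :=
  Set.Subset.antisymm (Set.image_subset_iff.2 fun _ => flowCompletion_mem_transportPolytope)
    fun _ => exists_flowCompletion_eq

lemma flowEntropy_eq_sum_entH_flowCompletion (hf : f ∈ FlowPolytope n N) :
    flowEntropy n N f = ∑ i, ∑ j, entH (flowCompletion N f i j) := by
  have hsupp := (mem_flowPolytope_iff.1 hf).2.1
  have hentry : ∀ i j, entH (flowCompletion N f i j) =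
      (if i < j then entH (f i j) else 0) + if i = j then entH (flowSlack N f i) else 0 := by
    intro i j
    rcases lt_trichotomy i j with hij | rfl | hij
    · simp [flowCompletion_of_lt hij, hij, hij.ne]
    · simp [flowCompletion_self hsupp]
    · simp [flowCompletion_of_gt hsupp hij, hij.not_gt, hij.ne', entH_zero]
  have hslack : ∀ m : Fin (n + 1), (if 0 < (m : ℕ) ∧ (m : ℕ) < n then
      entH (∑ i, if i < m then N i - f i m else 0) else 0) = entH (flowSlack N f m) := by
    intro m
    rw [← sum_filter, filter_gt_eq_Iio, ← flowSlack]
    split_ifs with hm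
    · rfl
    · rw [flowSlack_eq_zero_of_not_interior hf hm, entH_zero]
  simp only [flowEntropy, hslack, hentry, sum_add_distrib, sum_ite_eq,
    mem_univ, if_true]

lemma castSucc_le_succ_rev_iff {i j : Fin n} :
    i.castSucc ≤ j.rev.succ ↔ (i : ℕ) + (j : ℕ) ≤ n := by
  simp only [Fin.le_def, Fin.val_castSucc, Fin.val_succ, Fin.val_rev]
  omega

lemma image_entropy_transportPolytope_fin (hsum : ∑ i, N i = 0) :
    (fun A => ∑ i, ∑ j, entH (A i j)) ''
        transportPolytope (fun i j : Fin n => (i : ℕ) + (j : ℕ) ≤ n)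
          (fun i => ∑ k ∈ Iic i.castSucc, N k) (fun j => ∑ k ∈ Iic j.rev.castSucc, N k) =
      (fun B => ∑ i, ∑ j, entH (B i j)) ''
        transportPolytope (· ≤ ·) (fun i => ∑ k ∈ Iic i, N k) fun j => ∑ k ∈ Iio j, N k := by
  -- The last row and the first column are empty; the other columns are taken in reverse order.
  refine image_entropy_transportPolytope_comp (S := (· ≤ ·)) (ι := Fin.castSucc)
    (κ := fun j : Fin n => j.rev.succ) (r := fun i => ∑ k ∈ Iic i, N k)
    (c := fun j => ∑ k ∈ Iio j, N k) (Fin.castSucc_injective n)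
    ((Fin.succ_injective n).comp Fin.rev_injective)
    (fun _ _ => castSucc_le_succ_rev_iff.symm) (fun i hi => ?_) fun j hj => ?_
  · obtain rfl : i = Fin.last n := by
      contrapose! hi
      exact Fin.exists_castSucc_eq.2 hi
    rwa [← Fin.top_eq_last, Iic_top]
  · obtain rfl : j = 0 := by
      contrapose! hj
      exact (Fin.rev_surjective.range_comp Fin.succ).ge (Fin.exists_succ_eq.2 hj)
    rw [← bot_eq_zero, Iio_bot, sum_empty]

lemma image_flowEntropy (hsum : ∑ i, N i = 0) :
    flowEntropy n N '' FlowPolytope n N =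
      (fun A => ∑ i, ∑ j, entH (A i j)) ''
        transportPolytope (fun i j : Fin n => (i : ℕ) + (j : ℕ) ≤ n)
          (fun i => ∑ k ∈ Iic i.castSucc, N k) fun j => ∑ k ∈ Iic j.rev.castSucc, N k := by
  rw [image_entropy_transportPolytope_fin hsum, ← image_flowCompletion, Set.image_image]
  exact Set.image_congr fun f hf => flowEntropy_eq_sum_entH_flowCompletion hf

lemma sPartial_cast (N : Fin (n + 1) → ℤ) (i : Fin n) :
    (sPartial n N i : ℝ) = ∑ k ∈ Iic i.castSucc, (N k : ℝ) := by
  have hfilter : Iic i.castSucc = univ.filter fun k : Fin (n + 1) => (k : ℕ) ≤ i := by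
    ext k
    simp [Fin.le_def]
  rw [sPartial, ← sum_filter, hfilter, Int.cast_sum]

end Flow

theorem capacity_eq_sup_exp_flowEntropy_general (n : ℕ) (N : Fin (n + 1) → ℝ)
    (hne : (FlowPolytope n N).Nonempty) :
    sInf {c : ℝ | ∃ x y : Fin n → ℝ, (∀ i, 0 < x i) ∧ (∀ j, 0 < y j) ∧
        (∀ i j : Fin n, (i : ℕ) + (j : ℕ) ≤ n → x i * y j < 1) ∧
        c = (∏ i : Fin n, ∏ j : Fin n,
              if (i : ℕ) + (j : ℕ) ≤ n then (1 - x i * y j)⁻¹ else 1) *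
            (∏ i : Fin n, x i ^ (-∑ k ∈ Iic i.castSucc, N k)) *
            (∏ j : Fin n, y j ^ (-∑ k ∈ Iic j.rev.castSucc, N k))} =
    sSup ((fun f => Real.exp (flowEntropy n N f)) '' FlowPolytope n N) := by
  have himage := image_flowEntropy (sum_eq_zero_of_mem_flowPolytope hne.some_mem)
  rw [← Set.image_image Real.exp (flowEntropy n N), himage]
  exact sInf_capacityObjective_eq_sSup_exp_entropy
    (Set.image_nonempty.1 (himage ▸ hne.image (flowEntropy n N)))

/-- **Proposition (capacity as a supremum of flow entropies).**
With `α_i = s_i` and `β_j = s_{n−1−j}`, the capacity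
`inf ∏_{i+j ≤ n} (1 − x_i y_j)^{−1} · ∏ x_i^{−α_i} · ∏ y_j^{−β_j}`
(over positive `x, y` with `x_i y_j < 1` whenever `i + j ≤ n`) equals
`sup_{f ∈ F_n(N)} e^{H(f)}`. -/
theorem capacity_eq_sup_exp_flowEntropy (n : ℕ) (hn : 1 ≤ n) (N : Fin (n + 1) → ℤ)
    (hsum : ∑ i, N i = 0)
    (hne : (FlowPolytope n fun i => (N i : ℝ)).Nonempty) :
    sInf {c : ℝ | ∃ x y : Fin n → ℝ, (∀ i, 0 < x i) ∧ (∀ j, 0 < y j) ∧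
        (∀ i j : Fin n, (i : ℕ) + (j : ℕ) ≤ n → x i * y j < 1) ∧
        c = (∏ i : Fin n, ∏ j : Fin n,
              if (i : ℕ) + (j : ℕ) ≤ n then (1 - x i * y j)⁻¹ else 1) *
            (∏ i : Fin n, x i ^ (-sPartial n N i)) *
            (∏ j : Fin n, y j ^ (-sPartial n N (n - 1 - (j : ℕ))))} =
    sSup ((fun f => Real.exp (flowEntropy n (fun i => (N i : ℝ)) f)) ''
      FlowPolytope n fun i => (N i : ℝ)) := by
  have hrev : ∀ j : Fin n, n - 1 - (j : ℕ) = j.rev := fun j => by rw [Fin.val_rev]; omega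
  simpa only [← Real.rpow_intCast, Int.cast_neg, hrev, sPartial_cast] using
    capacity_eq_sup_exp_flowEntropy_general n (fun i => (N i : ℝ)) hne
end

section
/- Let n ≥ 1, let N = (N_0, …, N_{n−1}, −∑_{i=0}^{n−1} N_i) and M = (M_0, …, M_{n−1}, −∑_{i=0}^{n−1} M_i) where all N_i and M_i are nonnegative integers, and suppose ∑_{i=0}^{k} N_i ≥ ∑_{i=0}^{k} M_i for every 0 ≤ k ≤ n−1. Then K_n(N) ≥ K_n(M). -/
open Finset

/-!
The partial sum `s_k` of the netflow is the amount of flow crossing the cut between `{0, …, k}` and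
`{k + 1, …, n}`, so it bounds every edge crossing that cut and there are finitely many flows with a
given netflow. Conversely, when the partial sums of a netflow are nonnegative and the last one is
zero, sending `s_k` along each edge `(k, k + 1)` realizes it. If `N` dominates `M`, this applies to
`N - M`, and adding the resulting flow embeds the flows with netflow `M` into those with netflow
`N`.
-/

section

variable {n : ℕ} {N M : Fin (n + 1) → ℤ} {f g : Fin (n + 1) → Fin (n + 1) → ℕ}

lemma sPartial_zero : sPartial n N 0 = N 0 := by
  simp [sPartial]

lemma sPartial_succ (i : Fin n) : sPartial n N (i + 1) = sPartial n N i + N i.succ := by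
  have hN : N i.succ = ∑ j, if j = i.succ then N j else 0 := by simp
  rw [hN, sPartial, sPartial, ← sum_add_distrib]
  refine sum_congr rfl fun j _ => ?_
  simp only [Fin.ext_iff, Fin.val_succ]
  split_ifs <;> omega

lemma sPartial_self : sPartial n N n = ∑ i, N i :=
  sum_congr rfl fun i _ => if_pos i.is_le

lemma sPartial_sub (k : ℕ) : sPartial n (N - M) k = sPartial n N k - sPartial n M k := by
  simp [sPartial, ← sum_filter]

lemma sPartial_extend (N : Fin n → ℤ) (k : Fin n) :
    sPartial n (extend n N) k = ∑ i, if i ≤ k then N i else 0 := by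
  simp [sPartial, extend, Fin.sum_univ_castSucc]

lemma sum_extend (N : Fin n → ℤ) : ∑ i, extend n N i = 0 := by
  simp [extend, Fin.sum_univ_castSucc]

lemma isIntFlow_iff :
    IsIntFlow n N f ↔ (∀ i j, ¬ i < j → f i j = 0) ∧
      ∀ i, ∑ j, (f i j : ℤ) - ∑ k, (f k i : ℤ) = N i := by
  refine and_congr_right fun hf => forall_congr' fun i => ?_
  have hsupp (i j : Fin (n + 1)) : (if i < j then (f i j : ℤ) else 0) = f i j := by
    simpa [eq_comm] using fun h : j ≤ i => hf i j h.not_gt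
  simp only [hsupp]

namespace IsIntFlow

lemma add (hf : IsIntFlow n N f) (hg : IsIntFlow n M g) : IsIntFlow n (N + M) (f + g) := by
  rw [isIntFlow_iff] at hf hg ⊢
  refine ⟨fun i j hij => by simp [hf.1 i j hij, hg.1 i j hij], fun i => ?_⟩
  simp only [Pi.add_apply, Nat.cast_add, sum_add_distrib, ← hf.2 i, ← hg.2 i]
  ring

lemma sum_mul_netflow (hf : IsIntFlow n N f) (w : Fin (n + 1) → ℤ) :
    ∑ i, w i * N i = ∑ i, ∑ j, (w i - w j) * f i j := by
  simp only [← (isIntFlow_iff.1 hf).2, mul_sub, sub_mul, mul_sum, sum_sub_distrib]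
  rw [sum_comm (f := fun i k => w i * (f k i : ℤ))]

lemma sPartial_eq_sum_cut (hf : IsIntFlow n N f) (k : ℕ) :
    sPartial n N k = ∑ i : Fin (n + 1), ∑ j : Fin (n + 1),
      if (i : ℕ) ≤ k ∧ k < j then (f i j : ℤ) else 0 := by
  have hw := hf.sum_mul_netflow fun i => if (i : ℕ) ≤ k then 1 else 0
  simp only [ite_mul, one_mul, zero_mul] at hw
  refine hw.trans (sum_congr rfl fun i _ => sum_congr rfl fun j _ => ?_)
  by_cases hij : i < j
  · rw [Fin.lt_def] at hij
    split_ifs <;> omega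
  · simp [hf.1 i j hij]

lemma le_sPartial (hf : IsIntFlow n N f) (a b : Fin (n + 1)) : (f a b : ℤ) ≤ sPartial n N a := by
  let c (i j : Fin (n + 1)) : ℤ := if (i : ℕ) ≤ a ∧ (a : ℕ) < j then f i j else 0
  have hc (i j) : 0 ≤ c i j := by positivity
  calc (f a b : ℤ) ≤ c a b := by
        by_cases hab : a < b
        · simp [c, hab]
        · simp [c, hf.1 a b hab]
    _ ≤ ∑ j, c a j := single_le_sum (fun j _ => hc a j) (mem_univ b)
    _ ≤ ∑ i, ∑ j, c i j :=
        single_le_sum (f := fun i => ∑ j, c i j) (fun i _ => sum_nonneg fun j _ => hc i j)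
          (mem_univ a)
    _ = sPartial n N a := (hf.sPartial_eq_sum_cut a).symm

end IsIntFlow

lemma finite_setOf_isIntFlow (N : Fin (n + 1) → ℤ) : {f | IsIntFlow n N f}.Finite :=
  (Set.finite_Iic fun a _ : Fin (n + 1) => (sPartial n N a).toNat).subset fun _ hf a b =>
    Int.ofNat_le.1 ((hf.le_sPartial a b).trans (Int.self_le_toNat _))

lemma IsIntFlow.Kn_le_Kn_add (hg : IsIntFlow n N g) (M : Fin (n + 1) → ℤ) :
    Kn n M ≤ Kn n (M + N) :=
  Set.ncard_le_ncard_of_injOn (· + g) (fun _ (hf : IsIntFlow n M _) => hf.add hg)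
    (add_left_injective g).injOn (finite_setOf_isIntFlow _)

/-- The flow supported on the path `0 → 1 → ⋯ → n` whose edge `(i, i + 1)` carries the partial sum
`N_0 + ⋯ + N_i`, used to realize the netflow `N`. Negative partial sums are truncated to `0`. -/
def pathFlow (n : ℕ) (N : Fin (n + 1) → ℤ) (i j : Fin (n + 1)) : ℕ :=
  if (j : ℕ) = i + 1 then (sPartial n N i).toNat else 0

lemma sum_pathFlow_right (hsum : ∑ i, N i = 0) (hN : ∀ k < n, 0 ≤ sPartial n N k)
    (i : Fin (n + 1)) : ∑ j, (pathFlow n N i j : ℤ) = sPartial n N i := by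
  cases i using Fin.lastCases with
  | last =>
    rw [Fin.val_last, sPartial_self, hsum]
    refine sum_eq_zero fun j _ => ?_
    simp [pathFlow, j.isLt.ne]
  | cast i =>
    rw [sum_eq_single i.succ]
    · simp [pathFlow, hN i i.isLt]
    · intro j _ hj
      simp_all [pathFlow, Fin.ext_iff]
    · simp

lemma sum_pathFlow_left_zero : ∑ k, (pathFlow n N k 0 : ℤ) = 0 := by
  simp [pathFlow]

lemma sum_pathFlow_left_succ (hN : ∀ k < n, 0 ≤ sPartial n N k) (i : Fin n) :
    ∑ k, (pathFlow n N k i.succ : ℤ) = sPartial n N i := by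
  rw [sum_eq_single i.castSucc]
  · simp [pathFlow, hN i i.isLt]
  · intro k _ hk
    simp_all [pathFlow, Fin.ext_iff, eq_comm]
  · simp

lemma isIntFlow_pathFlow (hsum : ∑ i, N i = 0) (hN : ∀ k < n, 0 ≤ sPartial n N k) :
    IsIntFlow n N (pathFlow n N) := by
  refine isIntFlow_iff.2 ⟨fun i j hij => if_neg (by rw [Fin.lt_def] at hij; omega), fun i => ?_⟩
  rw [sum_pathFlow_right hsum hN]
  cases i using Fin.cases with
  | zero => rw [sum_pathFlow_left_zero, Fin.val_zero, sPartial_zero, sub_zero]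
  | succ i => rw [sum_pathFlow_left_succ hN, Fin.val_succ, sPartial_succ, add_sub_cancel_left]

theorem kostant_monotone_of_dominance_general (hsum : ∑ i, M i = ∑ i, N i)
    (hdom : ∀ k < n, sPartial n M k ≤ sPartial n N k) : Kn n M ≤ Kn n N := by
  have hflow : IsIntFlow n (N - M) (pathFlow n (N - M)) :=
    isIntFlow_pathFlow (by simp [hsum]) fun k hk => by
      simpa only [sPartial_sub, sub_nonneg] using hdom k hk
  simpa only [add_sub_cancel] using hflow.Kn_le_Kn_add M

end

/-- **Proposition (dominance monotonicity of the Kostant partition function).**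
If `(N_0,…,N_{n−1})` dominates `(M_0,…,M_{n−1})` (all entries nonnegative),
then `K_n(N_0,…,N_{n−1},−∑ N_i) ≥ K_n(M_0,…,M_{n−1},−∑ M_i)`. -/
theorem kostant_monotone_of_dominance (n : ℕ) (hn : 1 ≤ n) (N M : Fin n → ℕ)
    (hdom : ∀ k : Fin n,
      (∑ i : Fin n, if i ≤ k then (M i : ℤ) else 0) ≤
        ∑ i : Fin n, if i ≤ k then (N i : ℤ) else 0) :
    Kn n (extend n fun i => (M i : ℤ)) ≤ Kn n (extend n fun i => (N i : ℤ)) :=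
  kostant_monotone_of_dominance_general (by simp only [sum_extend]) fun k hk => by
    simpa only [sPartial_extend _ ⟨k, hk⟩] using hdom ⟨k, hk⟩
end

section
/- Let n ≥ 2 and let N_0, …, N_{n−1} be nonnegative integers. Then K_n(N_0, …, N_{n−1}, −∑_{i=0}^{n−1} N_i) = ∑_f ∏_{i=0}^{n−2} (f_{i,n−1} + 1), where the sum is over all integer flows f on the complete graph k_n (with vertices 0, …, n−1) with netflow (N_0, …, N_{n−2}, −∑_{i=0}^{n−2} N_i). -/
open Finset

/-!
Merging the last two vertices of `k_{n+1}` turns a flow into a flow on `k_n`: the edges `(i, n - 1)`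
and `(i, n)` become one edge carrying the sum of their flows, and the edge `(n - 1, n)` disappears.
A flow `f` on `k_n` is recovered by splitting each `f_{i,n-1}` as `c_i + (f_{i,n-1} - c_i)` with
`0 ≤ c_i ≤ f_{i,n-1}`, conservation at `n - 1` forcing the flow `N_{n-1} + ∑ c_i` on `(n - 1, n)`.
This value is nonnegative as `N_{n-1} ≥ 0`, so all `∏ (f_{i,n-1} + 1)` splittings occur.
-/

namespace IsIntFlow

variable {n : ℕ} {N : Fin (n + 1) → ℤ} {f : Fin (n + 1) → Fin (n + 1) → ℕ}

lemma outflow_eq (hf : IsIntFlow n N f) (i : Fin (n + 1)) :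
    ∑ j, (f i j : ℤ) = N i + ∑ k with k < i, (f k i : ℤ) := by
  have hout : ∑ j, (f i j : ℤ) = ∑ j, if i < j then (f i j : ℤ) else 0 := by
    refine sum_congr rfl fun j _ ↦ ?_
    split_ifs with hij
    · rfl
    · simp [hf.1 i j hij]
  rw [hout, sum_filter, ← hf.2 i, sub_add_cancel]

/-- The flow out of `i` is bounded by `N i` plus the flow into `i`, so bounds propagate along the
acyclic orientation of the complete graph. -/
lemma exists_bound (N : Fin (n + 1) → ℤ) (i : Fin (n + 1)) :
    ∃ B : ℕ, ∀ f, IsIntFlow n N f → ∀ j, f i j ≤ B := by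
  induction i using WellFoundedLT.induction with
  | ind i ih =>
    choose B hB using ih
    let C : Fin (n + 1) → ℕ := fun k ↦ if hk : k < i then B k hk else 0
    refine ⟨(N i + ∑ k with k < i, (C k : ℤ)).toNat, fun f hf j ↦ ?_⟩
    have hin : ∑ k with k < i, (f k i : ℤ) ≤ ∑ k with k < i, (C k : ℤ) := by
      refine sum_le_sum fun k hk ↦ ?_
      have hki : k < i := (mem_filter.1 hk).2
      simpa [C, hki] using hB k hki f hf i
    have hout : (f i j : ℤ) ≤ ∑ j, (f i j : ℤ) :=
      single_le_sum (f := fun j ↦ (f i j : ℤ)) (fun _ _ ↦ Int.natCast_nonneg _) (mem_univ j)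
    have := hf.outflow_eq i
    omega

instance finite (N : Fin (n + 1) → ℤ) : Finite {f // IsIntFlow n N f} := by
  choose B hB using exists_bound N
  exact ((Set.finite_Iic fun i _ ↦ B i).subset fun f hf i ↦ hB i f hf).to_subtype

end IsIntFlow

lemma isIntFlow_succ_iff {n : ℕ} {N : Fin (n + 2) → ℤ} {g : Fin (n + 2) → Fin (n + 2) → ℕ} :
    IsIntFlow (n + 1) N g ↔
      (∀ j, g (Fin.last _) j = 0) ∧
        IsIntFlow n (fun i ↦ N i.castSucc - g i.castSucc (Fin.last _))
          (fun i j ↦ g i.castSucc j.castSucc) ∧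
        N (Fin.last _) = -∑ i : Fin (n + 1), (g i.castSucc (Fin.last _) : ℤ) := by
  have hvanish : (∀ i j, ¬ i < j → g i j = 0) ↔ (∀ j, g (Fin.last _) j = 0) ∧
      ∀ i j : Fin (n + 1), ¬ i < j → g i.castSucc j.castSucc = 0 := by
    simp [Fin.forall_fin_succ' (n := n + 1), Fin.le_last, and_comm]
  rw [IsIntFlow, IsIntFlow, hvanish, and_assoc, and_assoc]
  refine and_congr_right fun _ ↦ and_congr_right fun _ ↦ ?_
  rw [Fin.forall_fin_succ']
  refine and_congr (forall_congr' fun i ↦ ?_) ?_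
  · simp only [Fin.sum_univ_castSucc (n := n + 1), Fin.castSucc_lt_castSucc_iff,
      Fin.castSucc_lt_last, (Fin.castSucc_lt_last i).not_gt, if_true, if_false]
    omega
  · simp [Fin.sum_univ_castSucc (n := n + 1), (Fin.castSucc_lt_last _).not_gt, eq_comm]

section AddSink

variable {n : ℕ}

/-- The flow on `n + 1` vertices obtained from a flow `f` on `n` vertices by adding a new last
vertex, to which each vertex `i` sends the flow `c i`. -/
def addSink (f : Fin n → Fin n → ℕ) (c : Fin n → ℕ) : Fin (n + 1) → Fin (n + 1) → ℕ :=
  Fin.snoc (α := fun _ ↦ Fin (n + 1) → ℕ) (fun i ↦ Fin.snoc (α := fun _ ↦ ℕ) (f i) (c i)) 0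

variable (f : Fin n → Fin n → ℕ) (c : Fin n → ℕ)

@[simp]
lemma addSink_castSucc_castSucc (i j : Fin n) : addSink f c i.castSucc j.castSucc = f i j := by
  simp [addSink]

@[simp]
lemma addSink_castSucc_last (i : Fin n) : addSink f c i.castSucc (Fin.last n) = c i := by
  simp [addSink]

@[simp]
lemma addSink_last (j : Fin (n + 1)) : addSink f c (Fin.last n) j = 0 := by
  simp [addSink]

lemma addSink_eq_iff {g : Fin (n + 1) → Fin (n + 1) → ℕ} :
    addSink f c = g ↔ (∀ i j, f i j = g i.castSucc j.castSucc) ∧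
      (∀ i, c i = g i.castSucc (Fin.last n)) ∧ ∀ j, g (Fin.last n) j = 0 := by
  simp only [funext_iff, Fin.forall_fin_succ', addSink_castSucc_castSucc, addSink_castSucc_last,
    addSink_last, forall_and, eq_comm (a := 0)]
  tauto

end AddSink

section MergeSplit

variable {m : ℕ}

/-- The netflow after identifying the last two vertices, which adds their netflows. -/
def mergeNetflow (N : Fin (m + 3) → ℤ) : Fin (m + 2) → ℤ :=
  Fin.snoc (fun i : Fin (m + 1) ↦ N i.castSucc.castSucc)
    (N (Fin.last (m + 1)).castSucc + N (Fin.last (m + 2)))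

/-- The flow after identifying the last two vertices: parallel edges are added up, and the edge
joining the two vertices is dropped. -/
def mergeFlow (g : Fin (m + 3) → Fin (m + 3) → ℕ) : Fin (m + 2) → Fin (m + 2) → ℕ :=
  addSink (fun i j ↦ g i.castSucc.castSucc j.castSucc.castSucc) fun i ↦
    g i.castSucc.castSucc (Fin.last (m + 1)).castSucc + g i.castSucc.castSucc (Fin.last (m + 2))

/-- The flow obtained by splitting the last vertex of `f` into two: of the flow from `i` into it,
`c i` goes to the first half and the rest to the second, and the first half, of netflow `a`,
forwards everything to the second. The subtraction is truncated unless `c i` is at most the flow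
being split. -/
def splitFlow (a : ℕ) (f : Fin (m + 2) → Fin (m + 2) → ℕ) (c : Fin (m + 1) → ℕ) :
    Fin (m + 3) → Fin (m + 3) → ℕ :=
  addSink (addSink (fun i j ↦ f i.castSucc j.castSucc) c)
    (Fin.snoc (fun i ↦ f i.castSucc (Fin.last (m + 1)) - c i) (a + ∑ i, c i))

variable {N : Fin (m + 3) → ℤ} {g : Fin (m + 3) → Fin (m + 3) → ℕ}
  {f : Fin (m + 2) → Fin (m + 2) → ℕ} {c : Fin (m + 1) → ℕ}

lemma isIntFlow_mergeFlow (hg : IsIntFlow (m + 2) N g) :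
    IsIntFlow (m + 1) (mergeNetflow N) (mergeFlow g) := by
  obtain ⟨-, hg', hlast⟩ := isIntFlow_succ_iff.1 hg
  obtain ⟨-, hrest, hpenult⟩ := isIntFlow_succ_iff.1 hg'
  refine isIntFlow_succ_iff.2 ⟨by simp [mergeFlow], ?_, ?_⟩
  · convert hrest using 2 with i
    · simp only [mergeNetflow, mergeFlow, Fin.snoc_castSucc, addSink_castSucc_last, Nat.cast_add]
      ring
    · simp [mergeFlow]
  · rw [Fin.sum_univ_castSucc] at hlast
    simp only [mergeFlow, mergeNetflow, Fin.snoc_last, addSink_castSucc_last, Nat.cast_add,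
      sum_add_distrib]
    linarith

lemma isIntFlow_splitFlow (hf : IsIntFlow (m + 1) (mergeNetflow N) f)
    (hN : 0 ≤ N (Fin.last (m + 1)).castSucc)
    (hc : ∀ i, c i ≤ f i.castSucc (Fin.last (m + 1))) :
    IsIntFlow (m + 2) N (splitFlow (N (Fin.last (m + 1)).castSucc).toNat f c) := by
  obtain ⟨-, hrest, hlast⟩ := isIntFlow_succ_iff.1 hf
  simp only [mergeNetflow, Fin.snoc_castSucc, Fin.snoc_last] at hrest hlast
  refine isIntFlow_succ_iff.2 ⟨by simp [splitFlow], isIntFlow_succ_iff.2 ⟨?_, ?_, ?_⟩, ?_⟩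
  · simp [splitFlow]
  · convert hrest using 2 with i
    · simp only [splitFlow, addSink_castSucc_castSucc, addSink_castSucc_last, Fin.snoc_castSucc,
        Nat.cast_sub (hc i)]
      ring
    · simp [splitFlow]
  · simp [splitFlow, hN]
  · rw [Fin.sum_univ_castSucc]
    simp only [splitFlow, addSink_castSucc_last, Fin.snoc_castSucc, Fin.snoc_last,
      Nat.cast_sub (hc _), sum_sub_distrib, Nat.cast_add, Nat.cast_sum, Int.toNat_of_nonneg hN]
    linarith

lemma mergeFlow_splitFlow (a : ℕ) (hf : ∀ j, f (Fin.last (m + 1)) j = 0)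
    (hc : ∀ i, c i ≤ f i.castSucc (Fin.last (m + 1))) : mergeFlow (splitFlow a f c) = f := by
  simp [mergeFlow, splitFlow, addSink_eq_iff, hf, hc]

lemma splitFlow_mergeFlow (hg : IsIntFlow (m + 2) N g)
    (hN : 0 ≤ N (Fin.last (m + 1)).castSucc) :
    splitFlow (N (Fin.last (m + 1)).castSucc).toNat (mergeFlow g)
      (fun i ↦ g i.castSucc.castSucc (Fin.last (m + 1)).castSucc) = g := by
  obtain ⟨hlast, hg', -⟩ := isIntFlow_succ_iff.1 hg
  obtain ⟨hpenult, -, hflow⟩ := isIntFlow_succ_iff.1 hg'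
  have hforward : (N (Fin.last (m + 1)).castSucc).toNat +
      ∑ i : Fin (m + 1), g i.castSucc.castSucc (Fin.last (m + 1)).castSucc =
        g (Fin.last (m + 1)).castSucc (Fin.last (m + 2)) := by
    zify
    rw [Int.toNat_of_nonneg hN]
    linarith
  simp [mergeFlow, splitFlow, addSink_eq_iff, Fin.forall_fin_succ', hlast, hpenult, hforward]

/-- Flows on `k_{m+3}` are the pairs of a flow on `k_{m+2}` and a splitting of its last vertex. -/
def mergeEquiv (hN : 0 ≤ N (Fin.last (m + 1)).castSucc) :
    {g // IsIntFlow (m + 2) N g} ≃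
      Σ f : {f // IsIntFlow (m + 1) (mergeNetflow N) f},
        Set.Iic fun i : Fin (m + 1) ↦ f.1 i.castSucc (Fin.last (m + 1)) where
  toFun g := ⟨⟨mergeFlow g.1, isIntFlow_mergeFlow g.2⟩,
    fun i ↦ g.1 i.castSucc.castSucc (Fin.last (m + 1)).castSucc, fun i ↦ by simp [mergeFlow]⟩
  invFun x := ⟨splitFlow (N (Fin.last (m + 1)).castSucc).toNat x.1.1 x.2.1,
    isIntFlow_splitFlow x.1.2 hN x.2.2⟩
  left_inv g := Subtype.ext (splitFlow_mergeFlow g.2 hN)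
  right_inv := by
    rintro ⟨⟨f, hf⟩, c, hc⟩
    refine Sigma.subtype_ext (Subtype.ext ?_) ?_
    · exact mergeFlow_splitFlow _ (isIntFlow_succ_iff.1 hf).1 hc
    · simp [splitFlow]

end MergeSplit

lemma mergeNetflow_extend {m : ℕ} (N : Fin (m + 2) → ℤ) :
    mergeNetflow (extend (m + 2) N) = extend (m + 1) (Fin.init N) := by
  simp [mergeNetflow, extend, Fin.init_def, Fin.sum_univ_castSucc]

lemma natCard_Iic_pi {ι : Type*} [Fintype ι] (b : ι → ℕ) :
    Nat.card (Set.Iic b) = ∏ i, (b i + 1) := by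
  classical
  simp [Pi.card_Iic]

theorem kostant_generating_algorithm_general (m : ℕ) (N : Fin (m + 2) → ℤ)
    (hN : 0 ≤ N (Fin.last (m + 1))) :
    Kn (m + 2) (extend (m + 2) N) =
      ∑ᶠ f : {f : Fin (m + 2) → Fin (m + 2) → ℕ //
          IsIntFlow (m + 1) (extend (m + 1) (Fin.init N)) f},
        ∏ i : Fin (m + 1), (f.1 i.castSucc (Fin.last (m + 1)) + 1) := by
  have := Fintype.ofFinite {f // IsIntFlow (m + 1) (extend (m + 1) (Fin.init N)) f}
  have hN' : 0 ≤ extend (m + 2) N (Fin.last (m + 1)).castSucc := by simpa [extend] using hN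
  rw [Kn, Nat.card_congr (mergeEquiv hN'), mergeNetflow_extend, Nat.card_sigma,
    finsum_eq_sum_of_fintype]
  simp only [natCard_Iic_pi]

/-- **Proposition (generating algorithm).** For `n = m + 2 ≥ 2` and nonnegative
integers `N_0, …, N_{n−1}`,
`K_n(N_0,…,N_{n−1},−∑ N_i) = ∑_f ∏_{i=0}^{n−2} (f_{i,n−1} + 1)`,
where the sum ranges over the integer flows on the complete graph `k_n`
(vertices `0,…,n−1`) with netflow `(N_0,…,N_{n−2},−∑_{i≤n−2} N_i)`. -/
theorem kostant_generating_algorithm (m : ℕ) (N : Fin (m + 2) → ℕ) :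
    Kn (m + 2) (extend (m + 2) fun i => (N i : ℤ)) =
      ∑ᶠ f : {f : Fin (m + 2) → Fin (m + 2) → ℕ //
          IsIntFlow (m + 1) (extend (m + 1) fun i : Fin (m + 1) => (N i.castSucc : ℤ)) f},
        ∏ i : Fin (m + 1), (f.1 i.castSucc (Fin.last (m + 1)) + 1) :=
  kostant_generating_algorithm_general m (fun i ↦ N i) (Int.natCast_nonneg _)
end
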